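/- Let ψ : I → ℂ be measurable and suppose there exist C, p > 0 such that |ψ(x)| ≤ C (sin(x/2))^p for all x ∈ I. Then the kernel K(x,y) = ψ(x)* K₁(x,y) ψ(y) defines a compact, self-adjoint integral operator on L²(I). -/

import Mathlib

open MeasureTheory Real Set Filter
open scoped Topology ENNReal ComplexConjugate

noncomputable section

/-- The fundamental periodic cell `I = [0, 2π)`. -/
def II : Set ℝ := Set.Ico 0 (2 * π)

/-- Lebesgue measure restricted to `I`. -/
def muI : Measure ℝ := volume.restrict II

/-- The dispersion relation `ω(x) = |sin(x/2)|`. -/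
def omg (x : ℝ) : ℝ := |Real.sin (x / 2)|

/-- `Ω(x,y,z) = ω(x) + ω(y) − ω(z) − ω(x+y−z)`. -/
def Omg (x y z : ℝ) : ℝ := omg x + omg y - omg z - omg (x + y - z)

/-- The representative of `x` modulo `2π` lying in `[0, 2π)`. -/
def mod2pi (x : ℝ) : ℝ := x - 2 * π * (⌊x / (2 * π)⌋ : ℝ)

/-- `h` on the fundamental cell: `h(x,z) = (z−x)/2 + 2 arcsin( tan(|z−x|/4) cos((x+z)/4) )`. -/
def h0 (x z : ℝ) : ℝ :=
  (z - x) / 2 + 2 * Real.arcsin (Real.tan (|z - x| / 4) * Real.cos ((x + z) / 4))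

/-- The extension of `h` to all of `ℝ²`: `h(x,z) = h(x mod 2π, z mod 2π) − (x − (x mod 2π))`. -/
def hFPU (x z : ℝ) : ℝ := h0 (mod2pi x) (mod2pi z) - (x - mod2pi x)

/-- `F₊(x,y) = (cos(x/2)+cos(y/2))² + 4 sin(x/2) sin(y/2)`. -/
def Fp (x y : ℝ) : ℝ :=
  (Real.cos (x / 2) + Real.cos (y / 2)) ^ 2 + 4 * Real.sin (x / 2) * Real.sin (y / 2)

/-- `F₋(x,y) = (cos(x/2)+cos(y/2))² − 4 sin(x/2) sin(y/2)`. -/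
def Fm (x y : ℝ) : ℝ :=
  (Real.cos (x / 2) + Real.cos (y / 2)) ^ 2 - 4 * Real.sin (x / 2) * Real.sin (y / 2)

/-- The kernel `K₁(x,y) = 4·𝟙(F₋(x,y) > 0)/√(F₋(x,y))`. -/
def K1 (x y : ℝ) : ℝ := if 0 < Fm x y then 4 / Real.sqrt (Fm x y) else 0

/-- The kernel `K₂(x,y) = 2/√(F₊(x,y))`. -/
def K2 (x y : ℝ) : ℝ := 2 / Real.sqrt (Fp x y)

/-- `V(x) = ∫_I K₂(x,y) dy`. -/
def VV (x : ℝ) : ℝ := ∫ y in II, K2 x y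

/-- `W(x) = sin²(x/2)·V(x)`. -/
def WW (x : ℝ) : ℝ := Real.sin (x / 2) ^ 2 * VV x


def GG (s t : ℝ) : ℝ :=
  4 * ((1 - s^2*t^2)^2 - 4*s*t*(1+s^2)*(1+t^2)) / ((1+s^2)^2 * (1+t^2)^2)

lemma cos_two_arctan (t : ℝ) : Real.cos (4 * Real.arctan t / 2) = (1 - t^2)/(1+t^2) := by
  have : 4 * Real.arctan t / 2 = 2 * Real.arctan t := by ring
  rw [this, Real.cos_two_mul, Real.cos_sq_arctan]
  have : 0 < 1 + t^2 := by positivity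
  field_simp
  ring

lemma sin_two_arctan (t : ℝ) : Real.sin (4 * Real.arctan t / 2) = 2*t/(1+t^2) := by
  have : 4 * Real.arctan t / 2 = 2 * Real.arctan t := by ring
  rw [this, Real.sin_two_mul, Real.sin_arctan, Real.cos_arctan]
  have h : 0 < 1 + t^2 := by positivity
  have h2 : √(1+t^2) * √(1+t^2) = 1 + t^2 := Real.mul_self_sqrt h.le
  have h3 : 0 < √(1+t^2) := by positivity
  rw [show 2 * (t / √(1 + t ^ 2)) * (1 / √(1 + t ^ 2)) = 2 * t / (√(1+t^2) * √(1+t^2)) by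
    field_simp, h2]

lemma Fm_arctan (s t : ℝ) : Fm (4 * Real.arctan s) (4 * Real.arctan t) = GG s t := by
  unfold Fm GG
  rw [cos_two_arctan, cos_two_arctan, sin_two_arctan, sin_two_arctan]
  have : 0 < 1 + t^2 := by positivity
  have : 0 < 1 + s^2 := by positivity
  field_simp
  ring

lemma cos_sum_arctan (s t : ℝ) : Real.cos (4 * Real.arctan s / 2) + Real.cos (4 * Real.arctan t / 2)
    = 2 * (1 - s^2*t^2) / ((1+s^2) * (1+t^2)) := by
  rw [cos_two_arctan, cos_two_arctan]
  have : 0 < 1 + t^2 := by positivity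
  have : 0 < 1 + s^2 := by positivity
  field_simp
  ring

lemma exists_t0 (s : ℝ) (hs : 0 < s) : ∃ t0, 0 < t0 ∧ s * t0 < 1 ∧
    (1 - s^2*t0^2)^2 = 4*s*t0*(1+s^2)*(1+t0^2) := by
  have hc : ContinuousOn (fun t : ℝ => (1 - s^2*t^2)^2 - 4*s*t*(1+s^2)*(1+t^2)) (Icc 0 (1/s)) := by
    fun_prop
  have h0 : (0:ℝ) ≤ 1/s := by positivity
  have := intermediate_value_Icc' h0 hc
  have hz : (0:ℝ) ∈ Icc ((1 - s^2*(1/s)^2)^2 - 4*s*(1/s)*(1+s^2)*(1+(1/s)^2))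
      ((1 - s^2*0^2)^2 - 4*s*0*(1+s^2)*(1+0^2)) := by
    constructor
    · have : s * (1/s) = 1 := by field_simp
      have e : s^2*(1/s)^2 = 1 := by rw [← mul_pow, this, one_pow]
      rw [e]
      have : 0 ≤ 4*s*(1/s)*(1+s^2)*(1+(1/s)^2) := by positivity
      linarith
    · norm_num
  obtain ⟨t0, ⟨ht1, ht2⟩, ht⟩ := this hz
  simp only at ht
  have ht0 : 0 < t0 := by
    rcases ht1.lt_or_eq with h | h
    · exact h
    · rw [← h] at ht; norm_num at ht
  refine ⟨t0, ht0, ?_, by linarith⟩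
  rw [le_div_iff₀ hs] at ht2
  rcases ht2.lt_or_eq with h | h
  · linarith
  · have e : s^2*t0^2 = 1 := by rw [← mul_pow, mul_comm, h, one_pow]
    rw [e] at ht
    have : 0 < 4*s*t0*(1+s^2)*(1+t0^2) := by positivity
    linarith

lemma GG_neg {s t t0 : ℝ} (hs : 0 < s) (ht0 : 0 < t0) 
    (h : (1 - s^2*t0^2)^2 = 4*s*t0*(1+s^2)*(1+t0^2)) (h1 : t0 ≤ t) (h2 : s * t < 1) :
    GG s t ≤ 0 := by
  have ht : 0 < t := ht0.trans_le h1
  unfold GG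
  apply div_nonpos_of_nonpos_of_nonneg _ (by positivity)
  have a1 : 4*s*t0*(1+s^2)*(1+t0^2) ≤ 4*s*t*(1+s^2)*(1+t^2) := by gcongr
  have a2 : (1 - s^2*t^2)^2 ≤ (1 - s^2*t0^2)^2 := by
    apply pow_le_pow_left₀
    · have : (s*t)^2 ≤ 1 := pow_le_one₀ (by positivity) h2.le
      rw [mul_pow] at this; linarith
    · have : s^2*t0^2 ≤ s^2*t^2 := by gcongr
      linarith
  linarith

lemma GG_lower {s t t0 : ℝ} (hs : 0 < s) (ht0 : 0 < t0) (h2 : s * t0 < 1)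
    (h : (1 - s^2*t0^2)^2 = 4*s*t0*(1+s^2)*(1+t0^2)) (ht : 0 < t) (h1 : t < t0)  :
    (1 - t/t0) / ((1+s^2)^2 * (1+t^2)^2) ≤ GG s t := by
  unfold GG
  have hP : s * t0 ≤ 1/4 := by
    set P := s*t0 with hPd
    have hPp : 0 < P := by positivity
    have e1 : (1 - P^2)^2 = 4*P*(1+s^2)*(1+t0^2) := by rw [hPd, mul_pow, h]; ring
    have e2 : 4*P*(1+P)^2 ≤ 4*P*(1+s^2)*(1+t0^2) := by
      have : (1+P)^2 ≤ (1+s^2)*(1+t0^2) := by rw [hPd]; nlinarith [sq_nonneg (s-t0)]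
      calc 4*P*(1+P)^2 ≤ 4*P*((1+s^2)*(1+t0^2)) := by gcongr
        _ = _ := by ring
    have e3 : 4*P ≤ (1-P)^2 := by
      have : 4*P*(1+P)^2 ≤ (1-P)^2*(1+P)^2 := by
        calc _ ≤ _ := e2
          _ = _ := e1.symm
          _ = _ := by ring
      exact le_of_mul_le_mul_right this (by positivity)
    nlinarith
  have hPt : s*t ≤ 1/4 := le_trans (by gcongr) hP
  have hst : s^2*t^2 ≤ 1/16 := by
    have : (s*t)^2 ≤ (1/4)^2 := pow_le_pow_left₀ (by positivity) hPt 2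
    rw [mul_pow] at this; linarith
  have hA : 1 ≤ 4*(1-s^2*t^2)^2 := by nlinarith
  have a1 : 4*s*t0*(1+s^2)*(1+t^2) ≤ (1 - s^2*t^2)^2 := by
    calc 4*s*t0*(1+s^2)*(1+t^2) ≤ 4*s*t0*(1+s^2)*(1+t0^2) := by gcongr
      _ = (1 - s^2*t0^2)^2 := h.symm
      _ ≤ _ := by
        apply pow_le_pow_left₀
        · have : (s*t0)^2 ≤ 1 := pow_le_one₀ (by positivity) h2.le
          rw [mul_pow] at this; linarith
        · have : s^2*t^2 ≤ s^2*t0^2 := by gcongr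
          linarith
  have a2 : 4*s*t*(1+s^2)*(1+t^2) ≤ (1 - s^2*t^2)^2 * (t/t0) := by
    calc 4*s*t*(1+s^2)*(1+t^2) = (4*s*t0*(1+s^2)*(1+t^2)) * (t/t0) := by field_simp
      _ ≤ _ := by gcongr
  gcongr
  have h3 : 0 ≤ 1 - t/t0 := by
    have : t/t0 < 1 := (div_lt_one ht0).2 h1
    linarith
  nlinarith

lemma pointwise_bound {s t0 r η : ℝ} (hs : 0 < s) (ht0 : 0 < t0) (h2 : s * t0 < 1)
    (h : (1 - s^2*t0^2)^2 = 4*s*t0*(1+s^2)*(1+t0^2)) (hη : 0 < η) (hr : 0 < r) (hr1 : r < 1) :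
    4 * t0 / (1 + (t0*r)^2) *
      (GG s (t0*r) ^ (-(1/2+η)) * (2*(t0*r)/(1+(t0*r)^2)) ^ (-(1/2:ℝ))) ≤
    (2 * 2^(4*η) * (2*s/(1+s^2)) ^ (-(1/2) - 4*η)) * (r^(-(1/2:ℝ)) * (1-r)^(-(1/2+η))) := by
  have hlow := GG_lower hs ht0 h2 h (t := t0*r) (by positivity) (by nlinarith)
  have hc : 0 < 1 - r := by linarith
  rw [show 1 - t0*r/t0 = 1 - r by field_simp] at hlow
  have hX : 0 < 1 + s^2 := by positivity
  have hY : 0 < 1 + (t0*r)^2 := by positivity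
  have hY0 : 0 < 1 + t0^2 := by positivity
  have hGpos : 0 < GG s (t0*r) := lt_of_lt_of_le (by positivity) hlow
  have l1 := Real.log_le_log (by positivity) hlow
  rw [Real.log_div (by positivity) (by positivity), Real.log_mul (by positivity) (by positivity),
    Real.log_pow, Real.log_pow] at l1
  have l2 : Real.log (1 + (t0*r)^2) ≤ Real.log (1+t0^2) := by
    apply Real.log_le_log (by positivity)
    have : t0 * r ≤ t0 * 1 := by gcongr
    rw [mul_one] at this
    gcongr
  have l3 : Real.log (4*s*t0*(1+s^2)*(1+t0^2)) ≤ 0 := by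
    apply Real.log_nonpos (by positivity)
    rw [← h]
    have : (s*t0)^2 ≤ 1 := pow_le_one₀ (by positivity) h2.le
    rw [mul_pow] at this
    apply pow_le_one₀ (by linarith)
    have : 0 ≤ s^2*t0^2 := by positivity
    linarith
  have e4 : Real.log 4 = 2 * Real.log 2 := by
    rw [show (4:ℝ) = 2^2 by norm_num, Real.log_pow]; norm_num
  rw [Real.log_mul (by positivity) (by positivity), Real.log_mul (by positivity) (by positivity),
    Real.log_mul (by positivity) (by positivity), Real.log_mul (by positivity) (by positivity), e4] at l3
  have l4 : Real.log (1+t0^2) ≤ Real.log ((1+s^2)/s^2) := by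
    apply Real.log_le_log (by positivity)
    rw [le_div_iff₀ (by positivity)]
    have : (s*t0)^2 ≤ 1 := pow_le_one₀ (by positivity) h2.le
    nlinarith
  rw [Real.log_div (by positivity) (by positivity), Real.log_pow] at l4
  rw [← Real.log_le_log_iff (by positivity) (by positivity)]
  rw [Real.log_mul (by positivity) (by positivity), Real.log_mul (by positivity) (by positivity),
    Real.log_mul (by positivity) (by positivity), Real.log_mul (by positivity) (by positivity),
    Real.log_mul (by positivity) (by positivity), Real.log_div (by positivity) (by positivity),
    Real.log_mul (by positivity) (by positivity), 
    Real.log_rpow (by positivity), Real.log_rpow (by positivity), Real.log_rpow (by positivity),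
    Real.log_rpow (by positivity), Real.log_mul (by positivity) (by positivity), Real.log_rpow (by positivity), Real.log_rpow (by positivity), 
    Real.log_div (by positivity) (by positivity), Real.log_div (by positivity) (by positivity),
    Real.log_mul (by positivity) (by positivity), Real.log_mul (by positivity) (by positivity),
    Real.log_mul (by positivity) (by positivity), e4]
  push_cast at *
  generalize Real.log (GG s (t0*r)) = lG at *
  generalize Real.log (1 + (t0*r)^2) = lY at *
  generalize Real.log (1 + t0^2) = lY0 at *
  generalize Real.log (1 + s^2) = lX at *
  generalize Real.log s = ls at *
  generalize Real.log t0 = lt at *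
  generalize Real.log r = lr at *
  generalize Real.log (1-r) = lc at *
  generalize Real.log 2 = l at *
  have m1 := mul_le_mul_of_nonneg_left l1 (show 0 ≤ 1/2+η by positivity)
  have m2 := mul_le_mul_of_nonneg_left l2 (show 0 ≤ 1/2+2*η by positivity)
  have m4 := mul_le_mul_of_nonneg_left l4 (show 0 ≤ 2*η by positivity)
  nlinarith

def PhiP (q x y : ℝ) : ℝ :=
  if 0 < Fm x y ∧ 0 < Real.cos (x/2) + Real.cos (y/2) then
    Fm x y ^ (-q) * Real.sin (y/2) ^ (-(1/2:ℝ)) else 0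

def Phi (q x y : ℝ) : ℝ :=
  if 0 < Fm x y then Fm x y ^ (-q) * Real.sin (y/2) ^ (-(1/2:ℝ)) else 0

lemma lint_beta {q : ℝ} (hq1 : q < 1) :
    ∫⁻ r in Ioo (0:ℝ) 1, ENNReal.ofReal (r^(-(1/2:ℝ)) * (1-r)^(-q)) ≤
      ENNReal.ofReal (ProbabilityTheory.beta (1/2) (1-q)) := by
  have hb := ProbabilityTheory.beta_pos (α := 1/2) (β := 1-q) (by norm_num) (by linarith)
  have h1 := ProbabilityTheory.lintegral_betaPDF_eq_one (α := 1/2) (β := 1-q) (by norm_num) (by linarith)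
  rw [ProbabilityTheory.lintegral_betaPDF] at h1
  have : ∀ r : ℝ, ENNReal.ofReal (r^(-(1/2:ℝ)) * (1-r)^(-q)) =
      ENNReal.ofReal (ProbabilityTheory.beta (1/2) (1-q)) *
      ENNReal.ofReal (1 / ProbabilityTheory.beta (1/2) (1-q) * r ^ ((1/2:ℝ) - 1) * (1 - r) ^ (1 - q - 1)) := by
    intro r
    rw [← ENNReal.ofReal_mul hb.le]
    congr 1
    rw [show (1/2:ℝ)-1 = -(1/2) by norm_num, show 1 - q - 1 = -q by ring]
    field_simp
  simp_rw [this]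
  rw [lintegral_const_mul' _ _ ENNReal.ofReal_ne_top, h1, mul_one]

lemma core_P {η x : ℝ} (hη : 0 < η) (hη2 : η < 1/2) (hx : x ∈ Ioo 0 (2*π)) :
    ∫⁻ y in Ioo 0 (2*π), ENNReal.ofReal (PhiP (1/2+η) x y) ≤
      ENNReal.ofReal ((2 * 2^(4*η) * ProbabilityTheory.beta (1/2) (1-(1/2+η))) *
        Real.sin (x/2) ^ (-(1/2) - 4*η)) := by
  have hpi := Real.pi_pos
  obtain ⟨hx0, hx1⟩ := hx
  set s := Real.tan (x/4) with hsd
  have hs : 0 < s := Real.tan_pos_of_pos_of_lt_pi_div_two (by linarith) (by linarith)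
  have hxs : x = 4 * Real.arctan s := by
    rw [hsd, Real.arctan_tan (by linarith) (by linarith)]; ring
  obtain ⟨t0, ht0, hst, h⟩ := exists_t0 s hs
  set f : ℝ → ℝ := fun r => 4 * Real.arctan (t0 * r) with hf
  set B := f '' (Ioo 0 1) with hB
  have hinj : InjOn f (Ioo 0 1) := by
    intro a _ b _ hab
    simp only [hf] at hab
    have := Real.arctan_injective (mul_left_cancel₀ (by norm_num) hab)
    exact mul_left_cancel₀ ht0.ne' this
  have hder : ∀ r ∈ Ioo (0:ℝ) 1, HasDerivWithinAt f (4 * t0 / (1 + (t0*r)^2)) (Ioo 0 1) r := by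
    intro r _
    have h1 : HasDerivAt (fun r : ℝ => t0 * r) t0 r := by
      simpa using (hasDerivAt_id r).const_mul t0
    have h2 := (h1.arctan).const_mul 4
    exact h2.hasDerivWithinAt.congr_deriv (by ring)
  have hBm : MeasurableSet B := by
    apply MeasurableSet.image_of_continuousOn_injOn measurableSet_Ioo _ hinj
    exact fun r hr => (hder r hr).continuousWithinAt
  have step1 : ∫⁻ y in Ioo 0 (2*π), ENNReal.ofReal (PhiP (1/2+η) x y) ≤
      ∫⁻ y in B, ENNReal.ofReal (PhiP (1/2+η) x y) := by
    rw [← lintegral_indicator measurableSet_Ioo, ← lintegral_indicator hBm]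
    apply lintegral_mono
    intro y
    by_cases hy : y ∈ Ioo 0 (2*π)
    · by_cases hyB : y ∈ B
      · simp [hy, hyB]
      · simp only [indicator, hy, hyB, if_true, if_false]
        rw [nonpos_iff_eq_zero, ENNReal.ofReal_eq_zero]
        unfold PhiP
        rw [if_neg]
        rintro ⟨hF, hcos⟩
        apply hyB
        obtain ⟨hy0, hy1⟩ := hy
        set t := Real.tan (y/4) with htd
        have ht : 0 < t := Real.tan_pos_of_pos_of_lt_pi_div_two (by linarith) (by linarith)
        have hyt : y = 4 * Real.arctan t := by
          rw [htd, Real.arctan_tan (by linarith) (by linarith)]; ring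
        rw [hxs, hyt, Fm_arctan] at hF
        rw [hxs, hyt, cos_sum_arctan] at hcos
        have hst1 : s * t < 1 := by
          by_contra hcon
          push Not at hcon
          have : 1 ≤ (s*t)^2 := one_le_pow₀ hcon
          rw [mul_pow] at this
          have : 2 * (1 - s^2*t^2) / ((1+s^2) * (1+t^2)) ≤ 0 :=
            div_nonpos_of_nonpos_of_nonneg (by linarith) (by positivity)
          linarith
        have htt : t < t0 := by
          by_contra hcon
          push Not at hcon
          have := GG_neg hs ht0 h hcon hst1
          linarith
        refine ⟨t/t0, ⟨by positivity, (div_lt_one ht0).2 htt⟩, ?_⟩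
        simp only [hf]
        rw [mul_div_cancel₀ _ ht0.ne', hyt]
    · simp [hy]
  refine step1.trans ?_
  rw [hB, lintegral_image_eq_lintegral_abs_deriv_mul measurableSet_Ioo hder hinj]
  have hsin : Real.sin (x/2) = 2*s/(1+s^2) := by rw [hxs, sin_two_arctan]
  have hb := ProbabilityTheory.beta_pos (α := 1/2) (β := 1-(1/2+η)) (by norm_num) (by linarith)
  rw [hsin]
  calc _ ≤ ∫⁻ r in Ioo (0:ℝ) 1, ENNReal.ofReal (2 * 2^(4*η) * (2*s/(1+s^2)) ^ (-(1/2) - 4*η)) *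
        ENNReal.ofReal (r^(-(1/2:ℝ)) * (1-r)^(-(1/2+η))) := by
        apply setLIntegral_mono' measurableSet_Ioo
        rintro r ⟨hr0, hr1⟩
        rw [← ENNReal.ofReal_mul (by positivity), ← ENNReal.ofReal_mul (by positivity)]
        apply ENNReal.ofReal_le_ofReal
        refine le_trans ?_ (pointwise_bound hs ht0 hst h hη hr0 hr1)
        rw [abs_of_pos (by positivity)]
        gcongr
        have hlow := GG_lower hs ht0 hst h (t := t0*r) (by positivity) (by nlinarith)
        rw [show 1 - t0*r/t0 = 1 - r by field_simp] at hlow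
        have hc : 0 < 1 - r := by linarith
        have hG : 0 < GG s (t0*r) := lt_of_lt_of_le (by positivity) hlow
        unfold PhiP
        simp only [hf]
        rw [hxs, Fm_arctan, sin_two_arctan]
        split_ifs
        · exact le_rfl
        · positivity
    _ = ENNReal.ofReal (2 * 2^(4*η) * (2*s/(1+s^2)) ^ (-(1/2) - 4*η)) *
        ∫⁻ r in Ioo (0:ℝ) 1, ENNReal.ofReal (r^(-(1/2:ℝ)) * (1-r)^(-(1/2+η))) := by
        rw [lintegral_const_mul' _ _ ENNReal.ofReal_ne_top]
    _ ≤ ENNReal.ofReal (2 * 2^(4*η) * (2*s/(1+s^2)) ^ (-(1/2) - 4*η)) *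
        ENNReal.ofReal (ProbabilityTheory.beta (1/2) (1-(1/2+η))) := by
        gcongr
        exact lint_beta (by linarith)
    _ = _ := by
        rw [← ENNReal.ofReal_mul (by positivity)]
        congr 1
        ring

lemma Fm_refl (x y : ℝ) : Fm (2*π - x) (2*π - y) = Fm x y := by
  unfold Fm
  rw [show (2*π - x)/2 = π - x/2 by ring, show (2*π - y)/2 = π - y/2 by ring]
  simp only [Real.cos_pi_sub, Real.sin_pi_sub]
  ring

lemma sin_half_pos {x : ℝ} (hx : x ∈ Ioo 0 (2*π)) : 0 < Real.sin (x/2) :=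
  Real.sin_pos_of_pos_of_lt_pi (by linarith [hx.1]) (by linarith [hx.2])

lemma Phi_split {q x y : ℝ} (hx : x ∈ Ioo 0 (2*π)) (hy : y ∈ Ioo 0 (2*π)) :
    Phi q x y ≤ PhiP q x y + PhiP q (2*π - x) (2*π - y) := by
  have hsx := sin_half_pos hx
  have hsy := sin_half_pos hy
  unfold Phi PhiP
  rw [Fm_refl, show (2*π - x)/2 = π - x/2 by ring, show (2*π - y)/2 = π - y/2 by ring]
  simp only [Real.cos_pi_sub, Real.sin_pi_sub]
  by_cases hF : 0 < Fm x y
  · have hpos : 0 ≤ Fm x y ^ (-q) * Real.sin (y/2) ^ (-(1/2:ℝ)) := by positivity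
    rcases lt_trichotomy (Real.cos (x/2) + Real.cos (y/2)) 0 with h | h | h
    · rw [if_pos hF, if_neg (fun hh => absurd hh.2 (not_lt.2 h.le)), if_pos ⟨hF, by linarith⟩]
      linarith
    · exfalso
      unfold Fm at hF
      rw [h] at hF
      have : 0 < 4 * Real.sin (x/2) * Real.sin (y/2) := by positivity
      norm_num at hF
      linarith
    · rw [if_pos hF, if_pos ⟨hF, h⟩]
      split_ifs <;> linarith
  · simp [hF]

lemma core {η x : ℝ} (hη : 0 < η) (hη2 : η < 1/2) (hx : x ∈ Ioo 0 (2*π)) :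
    ∫⁻ y in Ioo 0 (2*π), ENNReal.ofReal (Phi (1/2+η) x y) ≤
      ENNReal.ofReal ((4 * 2^(4*η) * ProbabilityTheory.beta (1/2) (1-(1/2+η))) *
        Real.sin (x/2) ^ (-(1/2) - 4*η)) := by
  have hx' : 2*π - x ∈ Ioo 0 (2*π) := ⟨by linarith [hx.2], by linarith [hx.1]⟩
  have c1 := core_P hη hη2 hx
  have c2 := core_P hη hη2 hx'
  have hb := ProbabilityTheory.beta_pos (α := 1/2) (β := 1-(1/2+η)) (by norm_num) (by linarith)
  have hsx := sin_half_pos hx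
  rw [show (2*π - x)/2 = π - x/2 by ring, Real.sin_pi_sub] at c2
  have hrefl : ∫⁻ y in Ioo 0 (2*π), ENNReal.ofReal (PhiP (1/2+η) (2*π - x) (2*π - y)) =
      ∫⁻ y in Ioo 0 (2*π), ENNReal.ofReal (PhiP (1/2+η) (2*π - x) y) := by
    rw [← lintegral_indicator measurableSet_Ioo, ← lintegral_indicator measurableSet_Ioo]
    rw [← lintegral_sub_left_eq_self (μ := volume) _ (2*π)]
    congr 1
    ext y
    simp only [indicator, mem_Ioo]
    congr 1
    · simp only [eq_iff_iff]; constructor <;> rintro ⟨a, b⟩ <;> constructor <;> linarith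
    · ring_nf
  have hPm : Measurable (fun y => ENNReal.ofReal (PhiP (1/2+η) x y)) := by
    apply Measurable.ennreal_ofReal
    have hm1 : Measurable (fun y => Fm x y) := by unfold Fm; fun_prop
    have hm2 : Measurable (fun y : ℝ => Real.cos (x/2) + Real.cos (y/2)) := by fun_prop
    unfold PhiP
    refine Measurable.ite ?_ (by fun_prop) (by fun_prop)
    exact (measurableSet_lt measurable_const hm1).inter (measurableSet_lt measurable_const hm2)
  calc _ ≤ ∫⁻ y in Ioo 0 (2*π), (ENNReal.ofReal (PhiP (1/2+η) x y) +
        ENNReal.ofReal (PhiP (1/2+η) (2*π - x) (2*π - y))) := by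
        apply setLIntegral_mono' measurableSet_Ioo
        intro y hy
        exact (ENNReal.ofReal_le_ofReal (Phi_split hx hy)).trans ENNReal.ofReal_add_le
    _ = _ := lintegral_add_left hPm _
    _ ≤ _ := add_le_add c1 (hrefl.le.trans c2)
    _ = _ := by
        rw [← ENNReal.ofReal_add (by positivity) (by positivity)]
        congr 1
        ring

/-- `L²` boundedness of a positive kernel, in `ℝ≥0∞` form. -/
def L2Bound (μ : Measure ℝ) (b : ℝ → ℝ → ℝ≥0∞) (M : ℝ≥0∞) : Prop :=
  ∀ f : ℝ → ℝ≥0∞, Measurable f →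
    ∫⁻ x, (∫⁻ y, b x y * f y ∂μ) ^ 2 ∂μ ≤ M ^ 2 * ∫⁻ y, f y ^ 2 ∂μ

lemma lintegral_cs (μ : Measure ℝ) {f g : ℝ → ℝ≥0∞} (hf : AEMeasurable f μ)
    (hg : AEMeasurable g μ) :
    (∫⁻ x, f x * g x ∂μ) ^ 2 ≤ (∫⁻ x, f x ^ 2 ∂μ) * (∫⁻ x, g x ^ 2 ∂μ) := by
  have h := ENNReal.lintegral_mul_le_Lp_mul_Lq μ Real.HolderConjugate.two_two hf hg
  simp only [Pi.mul_apply, ENNReal.rpow_two] at h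
  calc _ ≤ ((∫⁻ x, f x ^ 2 ∂μ) ^ (1/2:ℝ) * (∫⁻ x, g x ^ 2 ∂μ) ^ (1/2:ℝ)) ^ 2 := by gcongr
    _ = _ := by
      rw [mul_pow, ← ENNReal.rpow_two, ← ENNReal.rpow_two, ← ENNReal.rpow_mul, ← ENNReal.rpow_mul]
      norm_num

lemma schur_test (μ : Measure ℝ) [SFinite μ] {b : ℝ → ℝ → ℝ≥0∞}
    (hb : Measurable (Function.uncurry b))
    (hsymm : ∀ x y, b x y = b y x) {w : ℝ → ℝ} (hw : Measurable w) (hwpos : ∀ᵐ x ∂μ, 0 < w x)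
    {M : ℝ≥0∞}
    (hS : ∀ᵐ x ∂μ, ∫⁻ y, b x y * ENNReal.ofReal (w y) ∂μ ≤ M * ENNReal.ofReal (w x)) :
    L2Bound μ b M := by
  intro f hf
  set W : ℝ → ℝ≥0∞ := fun x => ENNReal.ofReal (w x) with hW
  have hWm : Measurable W := hw.ennreal_ofReal
  have hWpos : ∀ᵐ x ∂μ, W x ≠ 0 := by
    filter_upwards [hwpos] with x hx
    simp [hW, hx]
  have hWtop : ∀ x, W x ≠ ⊤ := fun x => ENNReal.ofReal_ne_top
  have hbx : ∀ x, Measurable (b x) := fun x => hb.of_uncurry_left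
  have hbs : ∀ x, Measurable (fun y => b y x) := fun x => hb.of_uncurry_right
  have e : ∀ a : ℝ≥0∞, (a ^ (1/2:ℝ)) ^ 2 = a := by
    intro a
    rw [← ENNReal.rpow_two, ← ENNReal.rpow_mul]; norm_num
  have step : ∀ᵐ x ∂μ, (∫⁻ y, b x y * f y ∂μ) ^ 2 ≤
      (M * W x) * ∫⁻ y, b x y * (f y ^ 2 * (W y)⁻¹) ∂μ := by
    filter_upwards [hS] with x hx
    have h1 : ∫⁻ y, b x y * f y ∂μ =
        ∫⁻ y, ((b x y * W y) ^ (1/2:ℝ)) * ((b x y * (f y ^ 2 * (W y)⁻¹)) ^ (1/2:ℝ)) ∂μ := by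
      apply lintegral_congr_ae
      filter_upwards [hWpos] with y hy
      rw [← ENNReal.mul_rpow_of_nonneg _ _ (by norm_num)]
      have : b x y * W y * (b x y * (f y ^ 2 * (W y)⁻¹)) = (b x y * f y) ^ 2 := by
        calc _ = (b x y * f y)^2 * (W y * (W y)⁻¹) := by ring
          _ = _ := by rw [ENNReal.mul_inv_cancel hy (hWtop y), mul_one]
      rw [this, ← ENNReal.rpow_two, ← ENNReal.rpow_mul]
      norm_num
    rw [h1]
    refine (lintegral_cs μ ?_ ?_).trans ?_
    · exact (((hbx x).mul hWm).pow_const _).aemeasurable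
    · exact (((hbx x).mul ((hf.pow_const 2).mul hWm.inv)).pow_const _).aemeasurable
    · simp only [e]
      gcongr
  have hm1 : Measurable (Function.uncurry fun x y => W x * (b x y * (f y ^ 2 * (W y)⁻¹))) := by
    apply Measurable.mul (hWm.comp measurable_fst)
    apply Measurable.mul hb
    exact (((hf.pow_const 2).mul hWm.inv).comp measurable_snd)
  calc ∫⁻ x, (∫⁻ y, b x y * f y ∂μ) ^ 2 ∂μ
      ≤ ∫⁻ x, (M * W x) * ∫⁻ y, b x y * (f y ^ 2 * (W y)⁻¹) ∂μ ∂μ := lintegral_mono_ae step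
    _ = ∫⁻ x, M * ∫⁻ y, W x * (b x y * (f y ^ 2 * (W y)⁻¹)) ∂μ ∂μ := by
        congr 1; ext x
        rw [lintegral_const_mul' _ _ (hWtop x), mul_assoc]
    _ = M * ∫⁻ x, ∫⁻ y, W x * (b x y * (f y ^ 2 * (W y)⁻¹)) ∂μ ∂μ := by
        rw [lintegral_const_mul]
        exact hm1.lintegral_prod_right
    _ = M * ∫⁻ y, ∫⁻ x, W x * (b x y * (f y ^ 2 * (W y)⁻¹)) ∂μ ∂μ := by
        rw [lintegral_lintegral_swap hm1.aemeasurable]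
    _ = M * ∫⁻ y, (f y ^ 2 * (W y)⁻¹) * ∫⁻ x, b y x * W x ∂μ ∂μ := by
        congr 2; ext y
        rw [← lintegral_const_mul]
        · congr 1; ext x
          rw [hsymm x y]; ring
        · exact (hbx y).mul hWm
    _ ≤ M * ∫⁻ y, M * f y ^ 2 ∂μ := by
        gcongr 1
        apply lintegral_mono_ae
        filter_upwards [hS, hWpos] with y hy hy0
        calc _ ≤ (f y ^ 2 * (W y)⁻¹) * (M * W y) := by gcongr
          _ = M * f y ^ 2 * (W y * (W y)⁻¹) := by ring
          _ = _ := by rw [ENNReal.mul_inv_cancel hy0 (hWtop y), mul_one]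
    _ = _ := by
        rw [lintegral_const_mul _ (hf.pow_const 2)]
        ring

lemma L2Bound.mono {μ : Measure ℝ} {b b' : ℝ → ℝ → ℝ≥0∞} {M : ℝ≥0∞} (h : L2Bound μ b M)
    (hbb : ∀ᵐ x ∂μ, ∀ᵐ y ∂μ, b' x y ≤ b x y) : L2Bound μ b' M := by
  intro f hf
  refine le_trans ?_ (h f hf)
  apply lintegral_mono_ae
  filter_upwards [hbb] with x hx
  gcongr 1
  apply lintegral_mono_ae
  filter_upwards [hx] with y hy
  gcongr

lemma eLpNorm_sq (μ : Measure ℝ) (f : ℝ → ℂ) : (eLpNorm f 2 μ) ^ 2 = ∫⁻ x, ‖f x‖ₑ ^ 2 ∂μ := by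
  have := eLpNorm_nnreal_pow_eq_lintegral (f := f) (μ := μ) (p := 2) (by norm_num)
  simpa using this

section ops
set_option linter.unusedSectionVars false
variable {μ : Measure ℝ} [SFinite μ] {k : ℝ → ℝ → ℂ} {M : ℝ}

lemma enorm_int_sq (hM : L2Bound μ (fun x y => ‖k x y‖ₑ) (ENNReal.ofReal M)) {f : ℝ → ℂ}
    (hf : Measurable f) :
    eLpNorm (fun x => ∫ y, k x y * f y ∂μ) 2 μ ≤ ENNReal.ofReal M * eLpNorm f 2 μ := by
  rw [← ENNReal.pow_le_pow_left_iff (n := 2) (by norm_num), mul_pow, eLpNorm_sq, eLpNorm_sq]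
  refine le_trans ?_ (hM (fun y => ‖f y‖ₑ) hf.enorm)
  apply lintegral_mono
  intro x
  dsimp only
  gcongr
  refine (enorm_integral_le_lintegral_enorm _).trans ?_
  simp [enorm_mul]

lemma ae_integrable (hk : Measurable (Function.uncurry k))
    (hM : L2Bound μ (fun x y => ‖k x y‖ₑ) (ENNReal.ofReal M)) {f : ℝ → ℂ}
    (hf : Measurable f) (hf2 : MemLp f 2 μ) :
    ∀ᵐ x ∂μ, Integrable (fun y => k x y * f y) μ := by
  have h1 := hM (fun y => ‖f y‖ₑ) hf.enorm
  have h2 : ∫⁻ x, (∫⁻ y, ‖k x y‖ₑ * ‖f y‖ₑ ∂μ) ^ 2 ∂μ ≠ ⊤ := by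
    refine ne_top_of_le_ne_top ?_ h1
    rw [← eLpNorm_sq]
    exact ENNReal.mul_ne_top (by simp) (ENNReal.pow_ne_top hf2.eLpNorm_ne_top)
  have hm : Measurable (Function.uncurry fun x y => ‖k x y‖ₑ * ‖f y‖ₑ) :=
    hk.enorm.mul (hf.enorm.comp measurable_snd)
  have h3 := ae_lt_top (hm.lintegral_prod_right.pow_const 2) h2
  filter_upwards [h3] with x hx
  refine ⟨(hk.of_uncurry_left.mul hf).aestronglyMeasurable, ?_⟩
  rw [HasFiniteIntegral]
  simp only [enorm_mul]
  by_contra hcon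
  simp only [not_lt, top_le_iff] at hcon
  simp [hcon] at hx

lemma exists_op (hk : Measurable (Function.uncurry k)) (hM0 : 0 ≤ M)
    (hM : L2Bound μ (fun x y => ‖k x y‖ₑ) (ENNReal.ofReal M)) :
    ∃ T : Lp ℂ 2 μ →L[ℂ] Lp ℂ 2 μ, ∀ f : Lp ℂ 2 μ,
      (T f : ℝ → ℂ) =ᵐ[μ] fun x => ∫ y, k x y * f y ∂μ := by
  have hmeas : ∀ f : Lp ℂ 2 μ, Measurable (f : ℝ → ℂ) := fun f => (Lp.stronglyMeasurable f).measurable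
  have hmem : ∀ f : Lp ℂ 2 μ, MemLp (fun x => ∫ y, k x y * f y ∂μ) 2 μ := by
    intro f
    constructor
    · apply StronglyMeasurable.aestronglyMeasurable
      apply StronglyMeasurable.integral_prod_right
      apply Measurable.stronglyMeasurable
      exact hk.mul ((hmeas f).comp measurable_snd)
    · refine (enorm_int_sq hM (hmeas f)).trans_lt ?_
      exact ENNReal.mul_lt_top (by simp) (Lp.memLp f).eLpNorm_lt_top
  let L : Lp ℂ 2 μ →ₗ[ℂ] Lp ℂ 2 μ :=
    { toFun := fun f => (hmem f).toLp _
      map_add' := by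
        intro f g
        rw [← MemLp.toLp_add]
        apply MemLp.toLp_congr
        filter_upwards [ae_integrable hk hM (hmeas f) (Lp.memLp f),
          ae_integrable hk hM (hmeas g) (Lp.memLp g)] with x hf hg
        simp only [Pi.add_apply]
        rw [← integral_add hf hg]
        apply integral_congr_ae
        filter_upwards [Lp.coeFn_add f g] with y hy
        rw [hy, Pi.add_apply, mul_add]
      map_smul' := by
        intro c f
        simp only [RingHom.id_apply]
        rw [← MemLp.toLp_const_smul]
        apply MemLp.toLp_congr
        refine Eventually.of_forall fun x => ?_
        simp only [Pi.smul_apply]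
        rw [← integral_smul]
        apply integral_congr_ae
        filter_upwards [Lp.coeFn_smul c f] with y hy
        rw [hy, Pi.smul_apply, smul_eq_mul, smul_eq_mul]
        ring }
  refine ⟨L.mkContinuous M ?_, ?_⟩
  · intro f
    change ‖(hmem f).toLp _‖ ≤ _
    rw [Lp.norm_toLp, Lp.norm_def]
    rw [← ENNReal.toReal_ofReal hM0, ← ENNReal.toReal_mul]
    apply ENNReal.toReal_mono
    · exact ENNReal.mul_ne_top (by simp) (Lp.memLp f).eLpNorm_ne_top
    · exact enorm_int_sq hM (hmeas f)
  · intro f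
    exact (hmem f).coeFn_toLp

lemma op_norm_le (hM0 : 0 ≤ M)
    (hM : L2Bound μ (fun x y => ‖k x y‖ₑ) (ENNReal.ofReal M))
    {T : Lp ℂ 2 μ →L[ℂ] Lp ℂ 2 μ} (hT : ∀ f : Lp ℂ 2 μ,
      (T f : ℝ → ℂ) =ᵐ[μ] fun x => ∫ y, k x y * f y ∂μ) : ‖T‖ ≤ M := by
  apply T.opNorm_le_bound hM0
  intro f
  rw [Lp.norm_def, Lp.norm_def, ← ENNReal.toReal_ofReal hM0, ← ENNReal.toReal_mul]
  apply ENNReal.toReal_mono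
  · exact ENNReal.mul_ne_top (by simp) (Lp.memLp f).eLpNorm_ne_top
  · rw [eLpNorm_congr_ae (hT f)]
    exact enorm_int_sq hM (Lp.stronglyMeasurable f).measurable

lemma op_selfAdjoint (hk : Measurable (Function.uncurry k))
    (hM : L2Bound μ (fun x y => ‖k x y‖ₑ) (ENNReal.ofReal M))
    (hsymm : ∀ x y, (starRingEnd ℂ) (k x y) = k y x)
    {T : Lp ℂ 2 μ →L[ℂ] Lp ℂ 2 μ} (hT : ∀ f : Lp ℂ 2 μ,
      (T f : ℝ → ℂ) =ᵐ[μ] fun x => ∫ y, k x y * f y ∂μ) : IsSelfAdjoint T := by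
  rw [ContinuousLinearMap.isSelfAdjoint_iff_isSymmetric]
  intro f g
  have hmf : Measurable (f : ℝ → ℂ) := (Lp.stronglyMeasurable f).measurable
  have hmg : Measurable (g : ℝ → ℂ) := (Lp.stronglyMeasurable g).measurable
  change inner ℂ (T f) g = inner ℂ f (T g)
  rw [L2.inner_def, L2.inner_def]
  simp only [RCLike.inner_apply]
  have e1 : ∫ x, g x * (starRingEnd ℂ) ((T f : ℝ → ℂ) x) ∂μ =
      ∫ x, ∫ y, g x * ((starRingEnd ℂ) (k x y) * (starRingEnd ℂ) (f y)) ∂μ ∂μ := by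
    apply integral_congr_ae
    filter_upwards [hT f] with x hx
    rw [hx, ← integral_conj, ← integral_const_mul]
    simp
  have e2 : ∫ y, (T g : ℝ → ℂ) y * (starRingEnd ℂ) (f y) ∂μ =
      ∫ y, ∫ x, g x * ((starRingEnd ℂ) (k x y) * (starRingEnd ℂ) (f y)) ∂μ ∂μ := by
    apply integral_congr_ae
    filter_upwards [hT g] with x hx
    rw [hx, ← integral_mul_const]
    congr 1; ext y
    rw [hsymm]; ring
  rw [e1, e2]
  apply integral_integral_swap
  have hm : Measurable (Function.uncurry fun x y =>
      g x * ((starRingEnd ℂ) (k x y) * (starRingEnd ℂ) (f y))) := by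
    apply (hmg.comp measurable_fst).mul
    apply Measurable.mul
    · exact Complex.continuous_conj.measurable.comp hk
    · exact Complex.continuous_conj.measurable.comp (hmf.comp measurable_snd)
  refine ⟨hm.aestronglyMeasurable, ?_⟩
  rw [HasFiniteIntegral, lintegral_prod _ hm.enorm.aemeasurable]
  simp only [Function.uncurry, enorm_mul, RCLike.enorm_conj]
  have hm2 : Measurable (Function.uncurry fun x y => ‖k x y‖ₑ * ‖f y‖ₑ) :=
    hk.enorm.mul (hmf.enorm.comp measurable_snd)
  have e3 : ∀ x, ∫⁻ y, ‖g x‖ₑ * (‖k x y‖ₑ * ‖f y‖ₑ) ∂μ = ‖g x‖ₑ * ∫⁻ y, ‖k x y‖ₑ * ‖f y‖ₑ ∂μ := by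
    intro x
    rw [lintegral_const_mul' _ _ (by simp)]
  simp only [e3]
  have cs := lintegral_cs μ hmg.enorm.aemeasurable
    (hm2.lintegral_prod_right (ν := μ)).aemeasurable
  have fin : (∫⁻ x, ‖g x‖ₑ ^ 2 ∂μ) * (∫⁻ x, (∫⁻ y, ‖k x y‖ₑ * ‖f y‖ₑ ∂μ) ^ 2 ∂μ) ≠ ⊤ := by
    apply ENNReal.mul_ne_top
    · rw [← eLpNorm_sq]
      exact ENNReal.pow_ne_top (Lp.memLp g).eLpNorm_ne_top
    · refine ne_top_of_le_ne_top ?_ (hM (fun y => ‖f y‖ₑ) hmf.enorm)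
      rw [← eLpNorm_sq]
      exact ENNReal.mul_ne_top (by simp) (ENNReal.pow_ne_top (Lp.memLp f).eLpNorm_ne_top)
  by_contra hcon
  simp only [not_lt, top_le_iff] at hcon
  rw [hcon] at cs
  apply fin
  rw [← top_le_iff]
  simpa using cs

end ops

instance : IsFiniteMeasure muI := by
  unfold muI II
  infer_instance

lemma ae_mem_Ioo : ∀ᵐ x ∂muI, x ∈ Ioo 0 (2*π) := by
  have h1 : ∀ᵐ x ∂muI, x ∈ II := ae_restrict_mem measurableSet_Ico
  have h2 : ∀ᵐ x ∂muI, x ≠ 0 := ae_restrict_of_ae (Measure.ae_ne volume 0)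
  filter_upwards [h1, h2] with x hx hx0
  exact ⟨lt_of_le_of_ne hx.1 (Ne.symm hx0), hx.2⟩

lemma ae_mem_II : ∀ᵐ x ∂muI, x ∈ II := ae_restrict_mem measurableSet_Ico

lemma muI_eq : muI = volume.restrict (Ioo 0 (2*π)) := by
  unfold muI II
  exact Measure.restrict_congr_set Ioo_ae_eq_Ico.symm

lemma muI_univ : muI univ = ENNReal.ofReal (2*π) := by
  unfold muI II
  simp

/-- Constant kernels. -/
lemma L2Bound_const {c : ℝ} : L2Bound muI (fun _ _ => ENNReal.ofReal c)
    (ENNReal.ofReal (c * (2*π))) := by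
  apply schur_test muI (w := fun _ => 1) measurable_const (fun _ _ => rfl) measurable_const
  · simp
  · refine Eventually.of_forall fun x => ?_
    simp [muI_univ]
    rw [ENNReal.ofReal_mul' (by positivity)]
    simp

lemma rank_one_sum {μ : Measure ℝ} {ι : Type*} (s : Finset ι) (g h : ι → ℝ → ℂ)
    (hg : ∀ i, MemLp (g i) 2 μ) (hh : ∀ i, MemLp (h i) 2 μ) :
    ∃ T : Lp ℂ 2 μ →L[ℂ] Lp ℂ 2 μ, IsCompactOperator T ∧ ∀ f : Lp ℂ 2 μ,
      (T f : ℝ → ℂ) =ᵐ[μ] fun x => ∑ i ∈ s, g i x * ∫ y, h i y * f y ∂μ := by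
  classical
  induction s using Finset.induction_on with
  | empty =>
    refine ⟨0, isCompactOperator_zero, fun f => ?_⟩
    simp only [Finset.sum_empty]
    exact Lp.coeFn_zero ℂ 2 μ
  | insert a s ha ih =>
    obtain ⟨T, hTc, hT⟩ := ih
    have hh' : MemLp (fun y => (starRingEnd ℂ) (h a y)) 2 μ := (hh a).star
    let l : Lp ℂ 2 μ →L[ℂ] ℂ := innerSL ℂ (hh'.toLp _)
    have hl : ∀ f, l f = ∫ y, h a y * f y ∂μ := by
      intro f
      simp only [l, innerSL_apply_apply]
      rw [L2.inner_def]
      apply integral_congr_ae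
      filter_upwards [hh'.coeFn_toLp] with y hy
      rw [hy]
      simp [RCLike.inner_apply, mul_comm]
    let R : Lp ℂ 2 μ →L[ℂ] Lp ℂ 2 μ := (ContinuousLinearMap.toSpanSingleton ℂ ((hg a).toLp _)).comp l
    have hR : IsCompactOperator R := (isCompactOperator_of_locallyCompactSpace_dom l).clm_comp
      (ContinuousLinearMap.toSpanSingleton ℂ ((hg a).toLp _))
    refine ⟨R + T, hR.add hTc, fun f => ?_⟩
    have e : (R + T) f = (l f) • ((hg a).toLp _) + T f := by simp [R]
    rw [e]
    filter_upwards [Lp.coeFn_add ((l f) • ((hg a).toLp _)) (T f), hT f,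
      Lp.coeFn_smul (l f) ((hg a).toLp _), (hg a).coeFn_toLp] with x h1 h2 h3 h4
    rw [h1, Pi.add_apply, h2, h3, Pi.smul_apply, h4, Finset.sum_insert ha, hl, smul_eq_mul, mul_comm]

lemma compact_of_approx {μ : Measure ℝ} {T : Lp ℂ 2 μ →L[ℂ] Lp ℂ 2 μ}
    (h : ∀ ε > 0, ∃ T' : Lp ℂ 2 μ →L[ℂ] Lp ℂ 2 μ, IsCompactOperator T' ∧ ‖T - T'‖ ≤ ε) :
    IsCompactOperator T := by
  have hcl := isClosed_setOfPred_isCompactOperator (σ₁₂ := RingHom.id ℂ) (M₁ := Lp ℂ 2 μ)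
    (M₂ := Lp ℂ 2 μ)
  have : T ∈ closure { f : Lp ℂ 2 μ →L[ℂ] Lp ℂ 2 μ | IsCompactOperator f } := by
    rw [Metric.mem_closure_iff]
    intro ε hε
    obtain ⟨T', h1, h2⟩ := h (ε/2) (by positivity)
    refine ⟨T', h1, ?_⟩
    rw [dist_eq_norm]
    linarith
  rw [hcl.closure_eq] at this
  exact this

section contker
variable {ψ : ℝ → ℂ} {C : ℝ} {κ : ℝ → ℝ → ℝ}

lemma cont_bound (hκ : Continuous (Function.uncurry κ)) :
    ∃ B, 0 ≤ B ∧ ∀ x ∈ Icc 0 (2*π), ∀ y ∈ Icc 0 (2*π), |κ x y| ≤ B := by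
  obtain ⟨B, hB⟩ := ((isCompact_Icc (a := (0:ℝ)) (b := 2*π)).prod
    (isCompact_Icc (a := (0:ℝ)) (b := 2*π))).exists_bound_of_continuousOn hκ.continuousOn
  refine ⟨max B 0, le_max_right _ _, fun x hx y hy => ?_⟩
  exact (hB (x, y) ⟨hx, hy⟩).trans (le_max_left _ _)

lemma cont_compact (hψ : Measurable ψ) (hC : 0 ≤ C) (hb : ∀ x ∈ II, ‖ψ x‖ ≤ C)
    (hκ : Continuous (Function.uncurry κ)) {T : Lp ℂ 2 muI →L[ℂ] Lp ℂ 2 muI}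
    (hT : ∀ f : Lp ℂ 2 muI, (T f : ℝ → ℂ) =ᵐ[muI] 
      fun x => ∫ y, (starRingEnd ℂ (ψ x) * (κ x y : ℝ) * ψ y) * f y ∂muI) :
    IsCompactOperator T := by
  have hpi := Real.pi_pos
  have hsub : II ⊆ Icc 0 (2*π) := Ico_subset_Icc_self
  apply compact_of_approx
  intro ε hε
  set τ := ε / (C^2 * (2*π) + 1) with hτ
  have hτpos : 0 < τ := by positivity
  have huc := ((isCompact_Icc (a := (0:ℝ)) (b := 2*π)).prod
    (isCompact_Icc (a := (0:ℝ)) (b := 2*π))).uniformContinuousOn_of_continuous hκ.continuousOn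
  rw [Metric.uniformContinuousOn_iff] at huc
  obtain ⟨δ, hδ, huc⟩ := huc τ hτpos
  obtain ⟨n, hn⟩ := exists_nat_gt (1/δ)
  have hn0 : (0:ℝ) < n := lt_trans (by positivity) hn
  obtain ⟨m, hm⟩ := exists_nat_gt ((n:ℝ) * (2*π))
  obtain ⟨B, hB0, hB⟩ := cont_bound hκ
  -- restrict the sample points to `[0, 2π]`
  let pt : ℕ → ℝ := fun i => min ((i:ℝ)/n) (2*π)
  have hpt : ∀ i, pt i ∈ Icc 0 (2*π) := fun i => ⟨le_min (by positivity) (by positivity), min_le_right _ _⟩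
  let g : ℕ → ℝ → ℂ := fun i x => starRingEnd ℂ (ψ x) * (κ x (pt i) : ℝ)
  let h : ℕ → ℝ → ℂ := fun i y => if ⌊(n:ℝ) * y⌋₊ = i then ψ y else 0
  have hgm : ∀ i, Measurable (g i) := by
    intro i
    apply (Complex.continuous_conj.measurable.comp hψ).mul
    apply Complex.measurable_ofReal.comp
    exact (hκ.comp (by fun_prop : Continuous fun x : ℝ => (x, pt i))).measurable
  have hhm : ∀ i, Measurable (h i) := by
    intro i
    refine Measurable.ite ?_ hψ measurable_const
    exact (Nat.measurable_floor.comp (measurable_const_mul (n:ℝ))) (measurableSet_singleton i)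
  have hg : ∀ i, MemLp (g i) 2 muI := by
    intro i
    apply MemLp.of_bound (hgm i).aestronglyMeasurable (C * B)
    filter_upwards [ae_mem_II] with x hx
    simp only [g, norm_mul, RCLike.norm_conj, Complex.norm_real, Real.norm_eq_abs]
    exact mul_le_mul (hb x hx) (hB x (hsub hx) _ (hpt i)) (abs_nonneg _) hC
  have hhb : ∀ i, ∀ x ∈ II, ‖h i x‖ ≤ C := by
    intro i x hx
    simp only [h]
    split_ifs
    · exact hb x hx
    · simpa using hC
  have hh : ∀ i, MemLp (h i) 2 muI := by
    intro i
    apply MemLp.of_bound (hhm i).aestronglyMeasurable C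
    filter_upwards [ae_mem_II] with x hx
    exact hhb i x hx
  obtain ⟨T', hc, hT'⟩ := rank_one_sum (Finset.range m) g h hg hh
  refine ⟨T', hc, ?_⟩
  let D : ℝ → ℝ → ℂ := fun x y => starRingEnd ℂ (ψ x) * (κ x y : ℝ) * ψ y
    - ∑ i ∈ Finset.range m, g i x * h i y
  have hD : L2Bound muI (fun x y => ‖D x y‖ₑ) (ENNReal.ofReal (C^2 * τ * (2*π))) := by
    apply L2Bound_const.mono (b := fun _ _ => ENNReal.ofReal (C^2 * τ))
    filter_upwards [ae_mem_II] with x hx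
    filter_upwards [ae_mem_II] with y hy
    rw [← ofReal_norm]
    apply ENNReal.ofReal_le_ofReal
    have hfl : ⌊(n:ℝ) * y⌋₊ < m := by
      rw [Nat.floor_lt (mul_nonneg hn0.le hy.1)]
      refine lt_of_le_of_lt ?_ hm
      have := hy.2.le
      gcongr
    have e : D x y = starRingEnd ℂ (ψ x) * ((κ x y - κ x (pt ⌊(n:ℝ) * y⌋₊) : ℝ) : ℂ) * ψ y := by
      simp only [D, g, h]
      rw [Finset.sum_eq_single ⌊(n:ℝ) * y⌋₊]
      · simp only [if_true]; push_cast; ring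
      · intro b _ hb
        rw [if_neg (Ne.symm hb), mul_zero]
      · intro hcon
        simp [hfl] at hcon
    have hy0 : y ∈ Icc 0 (2*π) := hsub hy
    have hfle : (⌊(n:ℝ) * y⌋₊ : ℝ) / n ≤ y := by
      rw [div_le_iff₀ hn0, mul_comm y]
      exact Nat.floor_le (mul_nonneg hn0.le hy.1)
    have hfge : y - 1/n < (⌊(n:ℝ) * y⌋₊ : ℝ) / n := by
      have := Nat.lt_floor_add_one ((n:ℝ) * y)
      rw [lt_div_iff₀ hn0]
      have : (y - 1/n) * n = n * y - 1 := by field_simp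
      linarith
    have hpe : pt ⌊(n:ℝ) * y⌋₊ = (⌊(n:ℝ) * y⌋₊ : ℝ) / n := min_eq_left (hfle.trans hy0.2)
    have h1n : 1/(n:ℝ) < δ := by
      rw [div_lt_comm₀ hn0 hδ]; exact hn
    have hd : |κ x y - κ x (pt ⌊(n:ℝ) * y⌋₊)| ≤ τ := by
      have := huc (x, y) ⟨hsub hx, hy0⟩ (x, pt ⌊(n:ℝ) * y⌋₊) ⟨hsub hx, hpt _⟩ (by
        rw [Prod.dist_eq]
        simp only [dist_self]
        apply max_lt hδ
        rw [hpe, Real.dist_eq, abs_lt]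
        constructor <;> linarith)
      rw [Real.dist_eq] at this
      exact this.le
    rw [e, norm_mul, norm_mul, RCLike.norm_conj, Complex.norm_real, Real.norm_eq_abs]
    calc _ ≤ C * τ * C := by
          have := hb x hx
          have := hb y hy
          gcongr
      _ = _ := by ring
  have hTT : ‖T - T'‖ ≤ C^2 * τ * (2*π) := by
    apply op_norm_le (by positivity) hD
    intro f
    have hf1 : Integrable (f : ℝ → ℂ) muI := (Lp.memLp f).integrable (by norm_num)
    have hhi : ∀ i, Integrable (fun y => h i y * f y) muI := by
      intro i
      apply hf1.bdd_mul (c := C) (hhm i).aestronglyMeasurable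
      filter_upwards [ae_mem_II] with x hx
      exact hhb i x hx
    rw [sub_apply]
    filter_upwards [Lp.coeFn_sub (T f) (T' f), hT f, hT' f, ae_mem_II] with x h1 h2 h3 hx
    rw [h1, Pi.sub_apply, h2, h3]
    simp only [D, sub_mul, Finset.sum_mul]
    have i1 : Integrable (fun y => (starRingEnd ℂ (ψ x) * (κ x y : ℝ) * ψ y) * f y) muI := by
      apply hf1.bdd_mul (c := C * B * C)
      · apply Measurable.aestronglyMeasurable
        apply Measurable.mul _ hψ
        apply measurable_const.mul
        apply Complex.measurable_ofReal.comp
        exact (hκ.comp (by fun_prop : Continuous fun y : ℝ => (x, y))).measurable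
      · filter_upwards [ae_mem_II] with y hy
        rw [norm_mul, norm_mul, RCLike.norm_conj, Complex.norm_real, Real.norm_eq_abs]
        have := hb x hx
        have := hb y hy
        have := hB x (hsub hx) y (hsub hy)
        gcongr
    have i2 : ∀ i ∈ Finset.range m, Integrable (fun y => g i x * h i y * f y) muI := by
      intro i _
      simp only [mul_assoc]
      exact (hhi i).const_mul _
    rw [integral_sub i1 (integrable_finsetSum _ i2), integral_finsetSum _ i2]
    congr 1
    apply Finset.sum_congr rfl
    intro i _
    simp only [mul_assoc]
    rw [integral_const_mul]
  refine hTT.trans ?_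
  rw [hτ]
  have : C^2 * (ε / (C^2 * (2*π) + 1)) * (2*π) = ε * ((C^2 * (2*π)) / (C^2 * (2*π) + 1)) := by ring
  rw [this]
  have h1 : (C^2 * (2*π)) / (C^2 * (2*π) + 1) ≤ 1 := by
    rw [div_le_one (by positivity)]; linarith
  nlinarith

end contker

def HH (p q x y : ℝ) : ℝ :=
  Real.sin (x/2) ^ p * Real.sin (y/2) ^ p * (if 0 < Fm x y then Fm x y ^ (-q) else 0)

lemma Fm_symm (x y : ℝ) : Fm x y = Fm y x := by unfold Fm; ring

lemma Fm_cont : Continuous (Function.uncurry Fm) := by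
  unfold Function.uncurry Fm
  fun_prop

lemma HH_meas (p q : ℝ) : Measurable (Function.uncurry (HH p q)) := by
  have h := Fm_cont.measurable
  have h1 : Measurable fun z : ℝ × ℝ => if 0 < Fm z.1 z.2 then Fm z.1 z.2 ^ (-q) else 0 :=
    Measurable.ite (measurableSet_lt measurable_const h) (h.pow_const _) measurable_const
  have h2 : Measurable fun z : ℝ × ℝ => Real.sin (z.1/2) ^ p * Real.sin (z.2/2) ^ p := by
    fun_prop
  exact h2.mul h1

lemma HH_bound {η : ℝ} (hη : 0 < η) (hη2 : η < 1/2) : ∃ N : ℝ, 0 ≤ N ∧ ∀ α : ℝ, 0 ≤ α →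
    L2Bound muI (fun x y => ENNReal.ofReal (α * HH (4*η) (1/2+η) x y)) (ENNReal.ofReal (α * N)) := by
  have hb := ProbabilityTheory.beta_pos (α := 1/2) (β := 1-(1/2+η)) (by norm_num) (by linarith)
  refine ⟨4 * 2^(4*η) * ProbabilityTheory.beta (1/2) (1-(1/2+η)), by positivity, fun α hα => ?_⟩
  set N := 4 * 2^(4*η) * ProbabilityTheory.beta (1/2) (1-(1/2+η)) with hN
  have hN0 : 0 ≤ N := by positivity
  apply schur_test muI (w := fun x => Real.sin (x/2) ^ (-(1/2:ℝ)))
  · exact (measurable_const.mul (HH_meas _ _)).ennreal_ofReal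
  · intro x y
    unfold HH
    rw [Fm_symm x y]
    congr 1; ring
  · fun_prop
  · filter_upwards [ae_mem_Ioo] with x hx
    have := sin_half_pos hx
    positivity
  · filter_upwards [ae_mem_Ioo] with x hx
    have hsx := sin_half_pos hx
    rw [muI_eq]
    calc _ ≤ ∫⁻ y in Ioo 0 (2*π), ENNReal.ofReal (α * Real.sin (x/2)^(4*η)) *
            ENNReal.ofReal (Phi (1/2+η) x y) := by
          apply setLIntegral_mono' measurableSet_Ioo
          intro y hy
          have hsy := sin_half_pos hy
          have hsy1 : Real.sin (y/2) ^ (4*η) ≤ 1 :=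
            Real.rpow_le_one hsy.le (Real.sin_le_one _) (by positivity)
          rw [← ENNReal.ofReal_mul' (by positivity), ← ENNReal.ofReal_mul (by positivity)]
          apply ENNReal.ofReal_le_ofReal
          unfold HH Phi
          split_ifs with hF
          · calc _ = (α * Real.sin (x/2)^(4*η)) * (Fm x y ^ (-(1/2+η)) * Real.sin (y/2) ^ (-(1/2:ℝ)))
                  * Real.sin (y/2) ^ (4*η) := by ring
              _ ≤ (α * Real.sin (x/2)^(4*η)) * (Fm x y ^ (-(1/2+η)) * Real.sin (y/2) ^ (-(1/2:ℝ)))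
                  * 1 := by gcongr
              _ = _ := by ring
          · simp
      _ = ENNReal.ofReal (α * Real.sin (x/2)^(4*η)) *
            ∫⁻ y in Ioo 0 (2*π), ENNReal.ofReal (Phi (1/2+η) x y) := by
          rw [lintegral_const_mul' _ _ ENNReal.ofReal_ne_top]
      _ ≤ ENNReal.ofReal (α * Real.sin (x/2)^(4*η)) *
            ENNReal.ofReal (N * Real.sin (x/2) ^ (-(1/2) - 4*η)) := by
          gcongr
          exact core hη hη2 hx
      _ = _ := by
          rw [← ENNReal.ofReal_mul (by positivity), ← ENNReal.ofReal_mul (by positivity)]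
          congr 1
          rw [show (-(1/2:ℝ)) = 4*η + (-(1/2) - 4*η) by ring, Real.rpow_add hsx]
          rw [show 4*η + (-(1/2) - 4*η) - 4*η = -(1/2) - 4*η by ring]
          ring

/-- Continuous truncation of `K₁`. -/
def kap (e x y : ℝ) : ℝ :=
  4 * max (Fm x y) 0 / (max (Fm x y) e * Real.sqrt (max (Fm x y) e))

lemma kap_cont {e : ℝ} (he : 0 < e) : Continuous (Function.uncurry (kap e)) := by
  have h := Fm_cont
  have h2 : Continuous fun z : ℝ × ℝ => max (Fm z.1 z.2) e := h.max continuous_const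
  have h3 : Continuous fun z : ℝ × ℝ => max (Fm z.1 z.2) 0 := h.max continuous_const
  apply Continuous.div (continuous_const.mul h3) (h2.mul h2.sqrt)
  rintro ⟨x, y⟩
  have : 0 < max (Fm x y) e := lt_of_lt_of_le he (le_max_right _ _)
  exact (mul_pos this (Real.sqrt_pos.2 this)).ne'

lemma K1_meas : Measurable (Function.uncurry K1) := by
  have h := Fm_cont.measurable
  exact Measurable.ite (measurableSet_lt measurable_const h)
    (measurable_const.div h.sqrt) measurable_const

lemma inv_sqrt_le {F e η : ℝ} (hF : 0 < F) (he : F ≤ e) (hη : 0 < η) :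
    4 / Real.sqrt F ≤ 4 * e^η * F ^ (-(1/2+η)) := by
  have h1 : 4 / Real.sqrt F = 4 * F^η * F^(-(1/2+η)) := by
    rw [mul_assoc, ← Real.rpow_add hF, show η + -(1/2+η) = -(1/2:ℝ) by ring,
      Real.rpow_neg hF.le, ← Real.sqrt_eq_rpow, div_eq_mul_inv]
  rw [h1]
  gcongr

lemma K1_sub_kap {e η x y : ℝ} (he : 0 < e) (hη : 0 < η) :
    |K1 x y - kap e x y| ≤ 4 * e^η * (if 0 < Fm x y then Fm x y ^ (-(1/2+η)) else 0) := by
  unfold K1 kap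
  by_cases hF : 0 < Fm x y
  · rw [if_pos hF, if_pos hF, max_eq_left hF.le]
    have hs : 0 < Real.sqrt (Fm x y) := Real.sqrt_pos.2 hF
    rcases le_total e (Fm x y) with h | h
    · rw [max_eq_left h]
      have : 4 / √(Fm x y) - 4 * Fm x y / (Fm x y * √(Fm x y)) = 0 := by field_simp; ring
      rw [this, abs_zero]
      positivity
    · rw [max_eq_right h]
      have h1 : 4 * Fm x y / (e * √e) ≤ 4 / √(Fm x y) := by
        calc 4 * Fm x y / (e * √e) ≤ 4 * Fm x y / (Fm x y * √(Fm x y)) := by gcongr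
          _ = _ := by field_simp
      have h2 : 0 ≤ 4 * Fm x y / (e * √e) := by positivity
      rw [abs_of_nonneg (by linarith)]
      linarith [inv_sqrt_le hF h hη]
  · rw [if_neg hF, if_neg hF, max_eq_right (not_lt.1 hF)]
    simp

lemma Fm_le {x y : ℝ} (hx : x ∈ Ioo 0 (2*π)) (hy : y ∈ Ioo 0 (2*π)) : Fm x y ≤ 4 := by
  have := sin_half_pos hx
  have := sin_half_pos hy
  have h : 0 < 4 * Real.sin (x/2) * Real.sin (y/2) := by positivity
  unfold Fm
  have h1 := Real.cos_le_one (x/2)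
  have h2 := Real.cos_le_one (y/2)
  have h3 := Real.neg_one_le_cos (x/2)
  have h4 := Real.neg_one_le_cos (y/2)
  nlinarith

lemma K1_abs_le {η x y : ℝ} (hη : 0 < η) (hx : x ∈ Ioo 0 (2*π)) (hy : y ∈ Ioo 0 (2*π)) :
    |K1 x y| ≤ 4 * 4^η * (if 0 < Fm x y then Fm x y ^ (-(1/2+η)) else 0) := by
  unfold K1
  split_ifs with hF
  · rw [abs_of_nonneg (by positivity)]
    exact inv_sqrt_le hF (Fm_le hx hy) hη
  · simp

lemma ker_meas {ψ : ℝ → ℂ} (hψ : Measurable ψ) {κ : ℝ → ℝ → ℝ}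
    (hκ : Measurable (Function.uncurry κ)) :
    Measurable (Function.uncurry fun x y => (starRingEnd ℂ) (ψ x) * (κ x y : ℝ) * ψ y) := by
  apply Measurable.mul _ (hψ.comp measurable_snd)
  apply Measurable.mul _ (Complex.measurable_ofReal.comp hκ)
  exact Complex.continuous_conj.measurable.comp (hψ.comp measurable_fst)

lemma ker_bound {ψ : ℝ → ℂ} {C η c N : ℝ} {κ : ℝ → ℝ → ℝ} (hC : 0 < C) 
    (hb : ∀ x ∈ Ioo 0 (2*π), ‖ψ x‖ ≤ C * Real.sin (x/2) ^ (4*η))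
    (hκ : ∀ x ∈ Ioo 0 (2*π), ∀ y ∈ Ioo 0 (2*π),
      |κ x y| ≤ c * (if 0 < Fm x y then Fm x y ^ (-(1/2+η)) else 0))
    (hN : L2Bound muI (fun x y => ENNReal.ofReal ((C^2*c) * HH (4*η) (1/2+η) x y))
      (ENNReal.ofReal ((C^2*c) * N))) :
    L2Bound muI (fun x y => ‖(starRingEnd ℂ) (ψ x) * (κ x y : ℝ) * ψ y‖ₑ)
      (ENNReal.ofReal ((C^2*c) * N)) := by
  apply hN.mono
  filter_upwards [ae_mem_Ioo] with x hx
  filter_upwards [ae_mem_Ioo] with y hy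
  have hsx := sin_half_pos hx
  have hsy := sin_half_pos hy
  rw [← ofReal_norm]
  apply ENNReal.ofReal_le_ofReal
  rw [norm_mul, norm_mul, RCLike.norm_conj, Complex.norm_real, Real.norm_eq_abs]
  calc _ ≤ (C * Real.sin (x/2) ^ (4*η)) * (c * (if 0 < Fm x y then Fm x y ^ (-(1/2+η)) else 0)) *
        (C * Real.sin (y/2) ^ (4*η)) := by
        have h1 := hb x hx
        have h2 := hb y hy
        have h3 := hκ x hx y hy
        have h4 := (abs_nonneg _).trans h3
        gcongr
    _ = _ := by unfold HH; ring

/-- **Proposition 4.4.**  If `ψ` is measurable with `|ψ(x)| ≤ C sin(x/2)^p` on `I` for some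
`C, p > 0`, then the kernel `K(x,y) = ψ(x)* K₁(x,y) ψ(y)` defines a compact self-adjoint
integral operator on `L²(I)`. -/
theorem K1_kernel_compact
    (ψ : ℝ → ℂ) (hmeas : Measurable ψ) (C p : ℝ) (hC : 0 < C) (hp : 0 < p)
    (hbound : ∀ x ∈ II, ‖ψ x‖ ≤ C * Real.sin (x / 2) ^ p) :
    ∃ T : Lp ℂ 2 muI →L[ℂ] Lp ℂ 2 muI,
      IsCompactOperator T ∧ IsSelfAdjoint T ∧
      ∀ f : Lp ℂ 2 muI,
        (T f : ℝ → ℂ) =ᵐ[muI]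
          fun x => ∫ y in II, (starRingEnd ℂ) (ψ x) * (K1 x y : ℝ) * ψ y * f y := by
  set η := min p 1 / 4 with hη
  have hη0 : 0 < η := by have := lt_min hp one_pos; positivity
  have hη2 : η < 1/2 := by have := min_le_right p 1; rw [hη]; linarith
  have hb : ∀ x ∈ Ioo 0 (2*π), ‖ψ x‖ ≤ C * Real.sin (x/2) ^ (4*η) := by
    intro x hx
    refine (hbound x ⟨hx.1.le, hx.2⟩).trans ?_
    have : Real.sin (x/2) ^ p ≤ Real.sin (x/2) ^ (4*η) := by
      apply Real.rpow_le_rpow_of_exponent_ge (sin_half_pos hx) (Real.sin_le_one _)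
      rw [hη]
      have := min_le_left p 1
      linarith
    gcongr
  have hbC : ∀ x ∈ II, ‖ψ x‖ ≤ C := by
    intro x hx
    refine (hbound x hx).trans ?_
    have h0 : 0 ≤ Real.sin (x/2) :=
      Real.sin_nonneg_of_nonneg_of_le_pi (by linarith [hx.1]) (by linarith [hx.2])
    have := Real.rpow_le_one h0 (Real.sin_le_one _) hp.le
    nlinarith
  obtain ⟨N, hN0, hN⟩ := HH_bound hη0 hη2
  have hKm := ker_meas hmeas K1_meas
  have hKb := ker_bound hC hb (fun x hx y hy => K1_abs_le hη0 hx hy)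
    (hN (C^2*(4*4^η)) (by positivity))
  obtain ⟨T, hT⟩ := exists_op hKm (by positivity) hKb
  refine ⟨T, ?_, ?_, hT⟩
  · apply compact_of_approx
    intro ε hε
    set e := (ε / (4*C^2*N + 1)) ^ (1/η) with he
    have hq : 0 < ε / (4*C^2*N + 1) := by positivity
    have he0 : 0 < e := by positivity
    have heη : e ^ η = ε / (4*C^2*N + 1) := by
      rw [he, ← Real.rpow_mul hq.le, one_div_mul_cancel hη0.ne', Real.rpow_one]
    have hkm := ker_meas hmeas (kap_cont he0).measurable
    obtain ⟨B, hB0, hB⟩ := cont_bound (kap_cont he0)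
    have hkb : L2Bound muI (fun x y => ‖(starRingEnd ℂ) (ψ x) * (kap e x y : ℝ) * ψ y‖ₑ)
        (ENNReal.ofReal ((C*B*C) * (2*π))) := by
      apply L2Bound_const.mono
      filter_upwards [ae_mem_II] with x hx
      filter_upwards [ae_mem_II] with y hy
      rw [← ofReal_norm]
      apply ENNReal.ofReal_le_ofReal
      rw [norm_mul, norm_mul, RCLike.norm_conj, Complex.norm_real, Real.norm_eq_abs]
      have := hbC x hx
      have := hbC y hy
      have := hB x (Ico_subset_Icc_self hx) y (Ico_subset_Icc_self hy)
      gcongr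
    obtain ⟨T', hT'⟩ := exists_op hkm (by positivity) hkb
    refine ⟨T', cont_compact hmeas hC.le hbC (kap_cont he0) hT', ?_⟩
    have hDb := ker_bound (κ := fun x y => K1 x y - kap e x y) hC hb
      (fun x _ y _ => K1_sub_kap he0 hη0) (hN (C^2*(4*e^η)) (by positivity))
    have hnorm : ‖T - T'‖ ≤ C^2*(4*e^η)*N := by
      apply op_norm_le (by positivity) hDb
      intro f
      have hmf : Measurable (f : ℝ → ℂ) := (Lp.stronglyMeasurable f).measurable
      rw [sub_apply]
      filter_upwards [Lp.coeFn_sub (T f) (T' f), hT f, hT' f,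
        ae_integrable hKm hKb hmf (Lp.memLp f), ae_integrable hkm hkb hmf (Lp.memLp f)]
        with x h1 h2 h3 i1 i2
      rw [h1, Pi.sub_apply, h2, h3, ← integral_sub i1 i2]
      congr 1; ext y
      push_cast; ring
    refine hnorm.trans ?_
    rw [heη]
    have : C^2 * (4 * (ε / (4*C^2*N + 1))) * N = ε * ((4*C^2*N) / (4*C^2*N + 1)) := by ring
    rw [this]
    have h1 : (4*C^2*N) / (4*C^2*N + 1) ≤ 1 := by
      rw [div_le_one (by positivity)]; linarith
    nlinarith
  · apply op_selfAdjoint hKm hKb _ hT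
    intro x y
    simp only [map_mul, Complex.conj_conj, Complex.conj_ofReal]
    have : K1 x y = K1 y x := by unfold K1; rw [Fm_symm]
    rw [this]; ring
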